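/- Let n ≥ 1, let Z ⊆ ℤⁿ be nonempty, let H_Z be a complex Hilbert space with orthonormal basis {e_m : m ∈ Z}, and let {ξ_m : m ∈ Z} be any family of unit vectors in ℓ²(ℕ). Then there exists a POVM M on (𝕋ⁿ, ℬ(𝕋ⁿ)) acting on H_Z such that ⟨e_k, M(B) e_l⟩ = ⟨ξ_k, ξ_l⟩ ∫_B ⟨z, k − l⟩ dμ_n(z) for all k, l ∈ Z and Borel B ⊆ 𝕋ⁿ, and this M is covariant with respect to U_Z: U_Z(w) M(B) U_Z(w)* = M(w·B) for all w ∈ 𝕋ⁿ and all Borel B ⊆ 𝕋ⁿ. -/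

import Mathlib

open MeasureTheory Set

local notation "⟪" x ", " y "⟫" => @inner ℂ _ _ x y

noncomputable instance : MeasurableSpace Circle := borel Circle
instance : BorelSpace Circle := ⟨rfl⟩

/-- A normalized positive operator valued measure (POVM). -/
structure POVM (Ω : Type*) [MeasurableSpace Ω] (H : Type*) [NormedAddCommGroup H]
    [InnerProductSpace ℂ H] [CompleteSpace H] where
  toFun : Set Ω → (H →L[ℂ] H)
  isPositive : ∀ B : Set Ω, MeasurableSet B → (toFun B).IsPositive
  normalized : toFun Set.univ = 1
  m_iUnion : ∀ B : ℕ → Set Ω, (∀ k, MeasurableSet (B k)) →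
    Pairwise (Function.onFun Disjoint B) → ∀ φ ψ : H,
      HasSum (fun k => ⟪φ, toFun (B k) ψ⟫) ⟪φ, toFun (⋃ k, B k) ψ⟫

/-- `ℓ²(ℕ)`. -/
noncomputable abbrev ell2 : Type := lp (fun _ : ℕ => ℂ) 2

/-- The character `⟨w, m⟩ = w₁^{m₁} ⋯ w_n^{m_n}` of the torus `𝕋ⁿ`. -/
noncomputable def torusChar {n : ℕ} (w : Fin n → Circle) (m : Fin n → ℤ) : ℂ :=
  ∏ i, (w i : ℂ) ^ (m i)

/-- Covariance of a POVM `M` on `𝕋ⁿ` acting on `H`: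
`U_Z(w) M(B) U_Z(w)* = M(w·B)` for all `w ∈ 𝕋ⁿ`. -/
def TorusCovariant {n : ℕ} {H : Type*} [NormedAddCommGroup H] [InnerProductSpace ℂ H]
    [CompleteSpace H] (U : (Fin n → Circle) → (H ≃ₗᵢ[ℂ] H))
    (M : POVM (Fin n → Circle) H) : Prop :=
  ∀ w : Fin n → Circle, ∀ B : Set (Fin n → Circle), MeasurableSet B →
    ∀ φ ψ : H,
      ⟪(U w φ : H), M.toFun ((fun z => w * z) '' B) (U w ψ)⟫ = ⟪φ, M.toFun B ψ⟫

/-!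
The vectors `v m = (z ↦ conj ⟨z, m⟩ • ξ m)` of `L²(𝕋ⁿ; ℓ²)` are orthonormal, because distinct
characters of a group are orthogonal for an invariant probability measure. Hence `e m ↦ v m` extends
to an isometry `V`, and compressing multiplication by indicator functions along `V` gives a POVM
with the prescribed matrix elements. Translating `B` by `w` multiplies the matrix element at
`(k, l)` by `⟨w, k - l⟩`, which conjugation by `U w` does as well. The same argument works for
characters of any group with an invariant probability measure, and for vectors of any Hilbert space.
-/

section HilbertBasis

variable {𝕜 ι κ H F : Type*} [RCLike 𝕜] [NormedAddCommGroup H] [InnerProductSpace 𝕜 H]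
  [NormedAddCommGroup F] [InnerProductSpace 𝕜 F]

lemma continuousLinearMap_ext_inner_hilbertBasis (b : HilbertBasis ι 𝕜 H)
    (c : HilbertBasis κ 𝕜 F) {S T : H →L[𝕜] F}
    (h : ∀ k l, inner 𝕜 (c k) (S (b l)) = inner 𝕜 (c k) (T (b l))) : S = T := by
  have hdense : Dense (Submodule.span 𝕜 (range b) : Set H) :=
    Submodule.dense_iff_topologicalClosure_eq_top.mpr b.dense_span
  refine ContinuousLinearMap.ext_on hdense ?_
  rintro _ ⟨l, rfl⟩
  refine c.repr.injective (lp.ext (funext fun k => ?_))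
  rw [c.repr_apply_apply, c.repr_apply_apply, h]

lemma exists_linearIsometry_hilbertBasis_eq [CompleteSpace F] (b : HilbertBasis ι 𝕜 H)
    {v : ι → F} (hv : Orthonormal 𝕜 v) : ∃ V : H →ₗᵢ[𝕜] F, ∀ i, V (b i) = v i := by
  classical
  refine ⟨hv.orthogonalFamily.linearIsometry.comp b.repr.toLinearIsometry, fun i => ?_⟩
  calc hv.orthogonalFamily.linearIsometry (b.repr (b i))
      = hv.orthogonalFamily.linearIsometry (lp.single 2 i (1 : 𝕜)) := by rw [b.repr_self]
    _ = LinearIsometry.toSpanSingleton 𝕜 F (hv.1 i) 1 :=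
        hv.orthogonalFamily.linearIsometry_apply_single 1
    _ = v i := by simp

end HilbertBasis

namespace POVM

section OfIsometry

variable {Ω H E : Type*} [MeasurableSpace Ω] {μ : Measure Ω}
  [NormedAddCommGroup H] [InnerProductSpace ℂ H]
  [NormedAddCommGroup E] [InnerProductSpace ℂ E]

/-- The isometry `V : H → L²(μ; E)` followed by restriction of functions to `B`. -/
noncomputable def restrictIsometry (V : H →ₗᵢ[ℂ] Lp E 2 μ) (B : Set Ω) :
    H →L[ℂ] Lp E 2 (μ.restrict B) :=
  LpToLpRestrictCLM Ω E ℂ μ 2 B ∘L V.toContinuousLinearMap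

lemma inner_restrictIsometry (V : H →ₗᵢ[ℂ] Lp E 2 μ) (B : Set Ω) (φ ψ : H) :
    ⟪restrictIsometry V B φ, restrictIsometry V B ψ⟫ = ∫ z in B, ⟪V φ z, V ψ z⟫ ∂μ := by
  rw [L2.inner_def]
  refine integral_congr_ae ?_
  filter_upwards [LpToLpRestrictCLM_coeFn ℂ B (V φ), LpToLpRestrictCLM_coeFn ℂ B (V ψ)]
    with z hφ hψ
  exact congrArg₂ (inner ℂ) hφ hψ

variable [CompleteSpace H] [CompleteSpace E]

lemma inner_adjoint_comp_restrictIsometry (V : H →ₗᵢ[ℂ] Lp E 2 μ) (B : Set Ω) (φ ψ : H) :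
    ⟪φ, ((restrictIsometry V B).adjoint ∘L restrictIsometry V B) ψ⟫
      = ∫ z in B, ⟪V φ z, V ψ z⟫ ∂μ := by
  rw [ContinuousLinearMap.comp_apply, ContinuousLinearMap.adjoint_inner_right,
    inner_restrictIsometry]

/-- The compression along `V : H → L²(μ; E)` of the spectral measure `B ↦ 1_B` of `L²(μ; E)`; the
operator `V* 1_B V` is encoded as `R* R` with `R` the restriction of `V` to `B`. -/
noncomputable def ofIsometry (V : H →ₗᵢ[ℂ] Lp E 2 μ) : POVM Ω H where
  toFun B := (restrictIsometry V B).adjoint ∘L restrictIsometry V B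
  isPositive B _ := ContinuousLinearMap.isPositive_adjoint_comp_self (restrictIsometry V B)
  normalized := by
    ext ψ
    refine ext_inner_left ℂ fun φ => ?_
    rw [inner_adjoint_comp_restrictIsometry, setIntegral_univ, ← L2.inner_def, V.inner_map_map,
      one_apply_eq_self]
  m_iUnion B hB hdisj φ ψ := by
    simp only [inner_adjoint_comp_restrictIsometry]
    exact hasSum_integral_iUnion hB hdisj (L2.integrable_inner (V φ) (V ψ)).integrableOn

lemma inner_ofIsometry (V : H →ₗᵢ[ℂ] Lp E 2 μ) (B : Set Ω) (φ ψ : H) :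
    ⟪φ, (ofIsometry V).toFun B ψ⟫ = ∫ z in B, ⟪V φ z, V ψ z⟫ ∂μ :=
  inner_adjoint_comp_restrictIsometry V B φ ψ

end OfIsometry

section IsCovariant

variable {ι G H : Type*} [MeasurableSpace G] [Mul G] [NormedAddCommGroup H]
  [InnerProductSpace ℂ H] [CompleteSpace H]

/-- Covariance `U(w) M(B) U(w)* = M(wB)` of a POVM on a group; `TorusCovariant` is the case of the
torus. As there, the identity is written through matrix elements. -/
def IsCovariant (U : G → (H ≃ₗᵢ[ℂ] H)) (M : POVM G H) : Prop :=
  ∀ w : G, ∀ B : Set G, MeasurableSet B → ∀ φ ψ : H,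
    ⟪U w φ, M.toFun ((fun z => w * z) '' B) (U w ψ)⟫ = ⟪φ, M.toFun B ψ⟫

lemma isCovariant_of_hilbertBasis (b : HilbertBasis ι ℂ H) {U : G → (H ≃ₗᵢ[ℂ] H)}
    {M : POVM G H}
    (h : ∀ w : G, ∀ B : Set G, MeasurableSet B → ∀ k l : ι,
      ⟪U w (b k), M.toFun ((fun z => w * z) '' B) (U w (b l))⟫ = ⟪b k, M.toFun B (b l)⟫) :
    M.IsCovariant U := by
  intro w B hB φ ψ
  let T : H →L[ℂ] H := (U w).symm.toContinuousLinearEquiv ∘L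
    M.toFun ((fun z => w * z) '' B) ∘L (U w).toContinuousLinearEquiv
  have inner_T (x y : H) :
      ⟪x, T y⟫ = ⟪U w x, M.toFun ((fun z => w * z) '' B) (U w y)⟫ :=
    ((U w).inner_map_eq_flip x _).symm
  have T_eq : T = M.toFun B := continuousLinearMap_ext_inner_hilbertBasis b b fun k l => by
    rw [inner_T, h w B hB]
  rw [← inner_T, T_eq]

end IsCovariant

end POVM

section PhaseLp

variable {Ω E : Type*} [MeasurableSpace Ω] (μ : Measure Ω) [IsFiniteMeasure μ]
  [NormedAddCommGroup E] {u v : Ω → Circle}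

lemma memLp_inv_circle_smul_const [NormedSpace ℂ E] (hu : Measurable u) (x : E) :
    MemLp (fun z => (u z)⁻¹ • x) 2 μ := by
  refine MemLp.of_bound (C := ‖x‖) ?_ (.of_forall fun z => (Circle.norm_smul _ x).le)
  have hcont : Continuous fun t : Circle => t • x := by fun_prop
  exact (hcont.stronglyMeasurable.comp_measurable hu.inv).aestronglyMeasurable

/-- The vector `z ↦ (u z)⁻¹ • x` of `L²(μ; E)` attached to a phase `u` and a vector `x`. The phase
is inverted because the inner product is conjugate-linear in its first argument. -/
noncomputable def phaseLp [NormedSpace ℂ E] (hu : Measurable u) (x : E) : Lp E 2 μ :=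
  (memLp_inv_circle_smul_const μ hu x).toLp _

variable [InnerProductSpace ℂ E]

lemma inner_inv_circle_smul_inv_circle_smul (s t : Circle) (x y : E) :
    ⟪s⁻¹ • x, t⁻¹ • y⟫ = ⟪x, y⟫ * (s / t : Circle) := by
  rw [Circle.smul_def, Circle.smul_def, inner_smul_left, inner_smul_right,
    ← Circle.coe_inv_eq_conj, inv_inv, Circle.coe_div, Circle.coe_inv]
  ring

lemma setIntegral_inner_phaseLp (hu : Measurable u) (hv : Measurable v) (x y : E) (B : Set Ω) :
    ∫ z in B, ⟪phaseLp μ hu x z, phaseLp μ hv y z⟫ ∂μ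
      = ⟪x, y⟫ * ∫ z in B, ((u z / v z : Circle) : ℂ) ∂μ := by
  rw [← integral_const_mul]
  refine integral_congr_ae (ae_restrict_of_ae ?_)
  filter_upwards [(memLp_inv_circle_smul_const μ hu x).coeFn_toLp,
    (memLp_inv_circle_smul_const μ hv y).coeFn_toLp] with z hx hy
  rw [phaseLp, phaseLp, hx, hy, inner_inv_circle_smul_inv_circle_smul]

end PhaseLp

section Character

variable {ι G E : Type*} [Group G] [MeasurableSpace G] [MeasurableMul G] {μ : Measure G}
  [μ.IsMulLeftInvariant]

lemma integral_character_eq_zero {χ : G →* Circle} (hχ : χ ≠ 1) :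
    ∫ z, (χ z : ℂ) ∂μ = 0 := by
  obtain ⟨w, hw⟩ := DFunLike.ne_iff.mp hχ
  have translate : ∫ z, (χ z : ℂ) ∂μ = χ w * ∫ z, (χ z : ℂ) ∂μ := by
    rw [← integral_const_mul, ← integral_mul_left_eq_self (fun z => (χ z : ℂ)) w]
    simp only [map_mul, Circle.coe_mul]
  by_contra h
  exact hw (Circle.coe_eq_one.mp ((mul_eq_right₀ h).mp translate.symm))

lemma setIntegral_mul_left_image_character (χ : G →* Circle) (w : G) (B : Set G) :
    ∫ z in (fun z => w * z) '' B, (χ z : ℂ) ∂μ = χ w * ∫ z in B, (χ z : ℂ) ∂μ := by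
  rw [(measurePreserving_mul_left μ w).setIntegral_image_emb (measurableEmbedding_mulLeft w),
    ← integral_const_mul]
  simp only [map_mul, Circle.coe_mul]

lemma orthonormal_phaseLp_character [IsProbabilityMeasure μ] [NormedAddCommGroup E]
    [InnerProductSpace ℂ E] {χ : ι → G →* Circle} (hχ : Function.Injective χ)
    (hχ_meas : ∀ i, Measurable (χ i)) {ξ : ι → E} (hξ : ∀ i, ‖ξ i‖ = 1) :
    Orthonormal ℂ fun i => phaseLp μ (hχ_meas i) (ξ i) := by
  classical
  rw [orthonormal_iff_ite]
  intro k l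
  rw [L2.inner_def, ← setIntegral_univ, setIntegral_inner_phaseLp, setIntegral_univ]
  split_ifs with hkl
  · subst hkl
    simp [hξ]
  · have hdiv : χ k / χ l ≠ 1 := fun h => hkl (hχ (div_eq_one.mp h))
    exact mul_eq_zero_of_right _ (integral_character_eq_zero hdiv)

end Character

theorem stmt8_general {ι G H E : Type*} [Group G] [MeasurableSpace G] [MeasurableMul G]
    (μ : Measure G) [IsProbabilityMeasure μ] [μ.IsMulLeftInvariant]
    [NormedAddCommGroup H] [InnerProductSpace ℂ H] [CompleteSpace H]
    [NormedAddCommGroup E] [InnerProductSpace ℂ E] [CompleteSpace E]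
    {χ : ι → G →* Circle} (hχ : Function.Injective χ) (hχ_meas : ∀ i, Measurable (χ i))
    (b : HilbertBasis ι ℂ H) {U : G → (H ≃ₗᵢ[ℂ] H)}
    (hU : ∀ w i, U w (b i) = (χ i w : ℂ) • b i) {ξ : ι → E} (hξ : ∀ i, ‖ξ i‖ = 1) :
    ∃ M : POVM G H,
      (∀ k l : ι, ∀ B : Set G, MeasurableSet B →
        ⟪b k, M.toFun B (b l)⟫ = ⟪ξ k, ξ l⟫ * ∫ z in B, ((χ k / χ l) z : ℂ) ∂μ) ∧
      M.IsCovariant U := by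
  obtain ⟨V, hV⟩ :=
    exists_linearIsometry_hilbertBasis_eq b (orthonormal_phaseLp_character (μ := μ) hχ hχ_meas hξ)
  have matrix_element (k l : ι) (B : Set G) : ⟪b k, (POVM.ofIsometry V).toFun B (b l)⟫
      = ⟪ξ k, ξ l⟫ * ∫ z in B, ((χ k / χ l) z : ℂ) ∂μ := by
    rw [POVM.inner_ofIsometry, hV, hV, setIntegral_inner_phaseLp]
    rfl
  refine ⟨POVM.ofIsometry V, fun k l B _ => matrix_element k l B,
    POVM.isCovariant_of_hilbertBasis b fun w B _ k l => ?_⟩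
  rw [hU, hU, map_smul, inner_smul_left, inner_smul_right, matrix_element, matrix_element,
    setIntegral_mul_left_image_character, ← Circle.coe_inv_eq_conj, MonoidHom.div_apply,
    Circle.coe_div, Circle.coe_inv]
  field_simp [Circle.coe_ne_zero]

section Torus

variable {n : ℕ}

/-- The character `w ↦ ⟨w, m⟩` of the torus as a homomorphism into the circle group. -/
noncomputable def torusCharHom (m : Fin n → ℤ) : (Fin n → Circle) →* Circle where
  toFun w := ∏ i, w i ^ m i
  map_one' := by simp
  map_mul' w z := by simp [mul_zpow, Finset.prod_mul_distrib]

lemma torusCharHom_apply (m : Fin n → ℤ) (w : Fin n → Circle) :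
    torusCharHom m w = ∏ i, w i ^ m i :=
  rfl

lemma coe_torusCharHom (m : Fin n → ℤ) (w : Fin n → Circle) :
    (torusCharHom m w : ℂ) = torusChar w m :=
  map_prod Circle.coeHom (fun i => w i ^ m i) Finset.univ

lemma torusCharHom_sub (k l : Fin n → ℤ) :
    torusCharHom (k - l) = torusCharHom k / torusCharHom l := by
  refine DFunLike.ext _ _ fun w => ?_
  simp only [MonoidHom.div_apply, torusCharHom_apply, Pi.sub_apply, zpow_sub, ← div_eq_mul_inv,
    Finset.prod_div_distrib]

lemma torusCharHom_mulSingle (m : Fin n → ℤ) (i : Fin n) (t : Circle) :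
    torusCharHom m (Pi.mulSingle i t) = t ^ m i := by
  rw [torusCharHom_apply, Fintype.prod_eq_single i fun j hj => ?_, Pi.mulSingle_eq_same]
  rw [Pi.mulSingle_eq_of_ne hj, one_zpow]

lemma exists_circle_zpow_ne_one {a : ℤ} (ha : a ≠ 0) : ∃ t : Circle, t ^ a ≠ 1 := by
  refine ⟨Circle.exp (Real.pi / a), ?_⟩
  have ha' : (a : ℝ) ≠ 0 := Int.cast_ne_zero.mpr ha
  rw [← Circle.exp_intCast_mul, mul_div_cancel₀ _ ha']
  exact Circle.exp_pi_ne_one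

lemma torusCharHom_injective : Function.Injective (torusCharHom (n := n)) := by
  intro k l hkl
  by_contra hne
  obtain ⟨i, hi⟩ := Function.ne_iff.mp hne
  obtain ⟨t, ht⟩ := exists_circle_zpow_ne_one (sub_ne_zero.mpr hi)
  have hone : torusCharHom (k - l) = 1 := by rw [torusCharHom_sub, hkl, div_self']
  exact ht (by simpa [hone] using (torusCharHom_mulSingle (k - l) i t).symm)

lemma continuous_torusCharHom (m : Fin n → ℤ) : Continuous (torusCharHom m) :=
  continuous_finsetProd Finset.univ fun i _ => (continuous_apply i).zpow (m i)

end Torus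

theorem stmt8 (n : ℕ) (hn : 1 ≤ n) (Z : Set (Fin n → ℤ)) (hZ : Z.Nonempty)
    (H : Type*) [NormedAddCommGroup H] [InnerProductSpace ℂ H] [CompleteSpace H]
    (b : HilbertBasis Z ℂ H)
    (μ : Measure (Fin n → Circle)) (hHaar : μ.IsHaarMeasure) (hProb : IsProbabilityMeasure μ)
    (U : (Fin n → Circle) → (H ≃ₗᵢ[ℂ] H))
    (hU : ∀ w : Fin n → Circle, ∀ m : Z, U w (b m) = torusChar w (m : Fin n → ℤ) • b m)
    -- an arbitrary family of unit vectors in `ℓ²(ℕ)`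
    (ξ : Z → ell2) (hξ : ∀ m : Z, ‖ξ m‖ = 1) :
    ∃ M : POVM (Fin n → Circle) H,
      (∀ k l : Z, ∀ B : Set (Fin n → Circle), MeasurableSet B →
        ⟪b k, M.toFun B (b l)⟫
          = ⟪ξ k, ξ l⟫ * ∫ z in B, torusChar z ((k : Fin n → ℤ) - l) ∂μ) ∧
      TorusCovariant U M := by
  simpa only [Function.comp_apply, ← torusCharHom_sub, coe_torusCharHom] using! stmt8_general μ
    (torusCharHom_injective.comp Subtype.val_injective)
    (fun m => (continuous_torusCharHom m.1).measurable) b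
    (fun w m => (hU w m).trans (by rw [Function.comp_apply, coe_torusCharHom])) hξ
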